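/- arXiv:2306.04230 — 3 statements merged into one kernel-verified Lean document; each statement's English description precedes it below -/
import Mathlib

section
/- Let H be a real Hilbert space, let h : H → ℝ be convex and Fréchet differentiable, and suppose the gradient ∇h : H → H is Lipschitz continuous with constant 1/L for some L > 0. For any λ ∈ [0, 2L], the mapping S_λ : H → H defined by S_λ(x) = x − λ·∇h(x) is nonexpansive, i.e. ‖S_λ(x) − S_λ(y)‖ ≤ ‖x − y‖ for all x, y ∈ H. -/
open Filter Topology

/-!
Comparing the affine minorant of `h` at `x` (convexity) with its quadratic majorant at `y`
(Lipschitz gradient) at the point `y - L • (∇h y - ∇h x)`, which minimizes the gap between the two,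
improves the minorant by the term `L / 2 * ‖∇h y - ∇h x‖ ^ 2`. Adding the improved inequality to
the one with `x` and `y` exchanged shows that `∇h` is `L`-cocoercive (Baillon–Haddad), and expanding
`‖(x - y) - lam • (∇h x - ∇h y)‖ ^ 2` then gives the claim.
-/

open AffineMap Set
open scoped RealInnerProductSpace

section NormedSpace

variable {E F : Type*} [NormedAddCommGroup E] [NormedSpace ℝ E]
  [NormedAddCommGroup F] [NormedSpace ℝ F] {s : Set E} {x y : E}

theorem add_fderiv_sub_le_of_convexOn {f : E → ℝ} {f' : E →L[ℝ] ℝ} (hf : ConvexOn ℝ s f)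
    (hf' : HasFDerivWithinAt f f' s x) (hx : x ∈ s) (hy : y ∈ s) :
    f x + f' (y - x) ≤ f y := by
  have hline : ConvexOn ℝ (lineMap x y ⁻¹' s) (f ∘ lineMap (k := ℝ) x y) :=
    hf.comp_affineMap (lineMap x y)
  have hderiv : HasDerivWithinAt (f ∘ lineMap (k := ℝ) x y) (f' (y - x)) (lineMap x y ⁻¹' s) 0 :=
    HasFDerivWithinAt.comp_hasDerivWithinAt (t := s) 0 (by rwa [lineMap_apply_zero])
      hasDerivWithinAt_lineMap (mapsTo_preimage _ _)
  have hslope : f' (y - x) ≤ slope (f ∘ lineMap (k := ℝ) x y) 0 1 :=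
    hline.le_slope_of_hasDerivWithinAt (by simpa using hx) (by simpa using hy) one_pos hderiv
  simp only [slope_def_field, Function.comp_apply, lineMap_apply_one, lineMap_apply_zero,
    sub_zero, div_one] at hslope
  linarith

theorem norm_sub_sub_fderiv_le_of_lipschitz {f : E → F} {f' : E → E →L[ℝ] F} {K : ℝ}
    (hs : Convex ℝ s) (hf : ∀ z ∈ s, HasFDerivWithinAt f (f' z) s z)
    (hx : x ∈ s) (hlip : ∀ z ∈ s, ‖f' z - f' x‖ ≤ K * ‖z - x‖) (hy : y ∈ s) :
    ‖f y - f x - f' x (y - x)‖ ≤ K / 2 * ‖y - x‖ ^ 2 := by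
  have hmaps : MapsTo (lineMap x y) (Icc (0 : ℝ) 1) s := fun t ht ↦ hs.lineMap_mem hx hy ht
  let g : ℝ → F := fun t ↦ f (lineMap x y t) - f x - t • f' x (y - x)
  have hg : ∀ t ∈ Icc (0 : ℝ) 1,
      HasDerivWithinAt g ((f' (lineMap x y t) - f' x) (y - x)) (Icc 0 1) t := fun t ht ↦ by
    have hpath : HasDerivWithinAt (fun t ↦ f (lineMap x y t)) (f' (lineMap x y t) (y - x))
        (Icc (0 : ℝ) 1) t :=
      (hf _ (hmaps ht)).comp_hasDerivWithinAt t hasDerivWithinAt_lineMap hmaps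
    have hlinear : HasDerivWithinAt (fun t : ℝ ↦ t • f' x (y - x)) (f' x (y - x)) (Icc 0 1) t := by
      simpa only [id_eq, one_smul] using (hasDerivWithinAt_id t _).smul_const (f' x (y - x))
    exact (hpath.sub_const (f x)).fun_sub hlinear
  have hbound : ∀ t ∈ Ico (0 : ℝ) 1,
      ‖(f' (lineMap x y t) - f' x) (y - x)‖ ≤ K / 2 * ‖y - x‖ ^ 2 * (2 * t) := fun t ht ↦ by
    have hdist : ‖lineMap x y t - x‖ = t * ‖y - x‖ := by
      rw [lineMap_apply_module', add_sub_cancel_right, norm_smul, Real.norm_of_nonneg ht.1]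
    calc ‖(f' (lineMap x y t) - f' x) (y - x)‖
        ≤ ‖f' (lineMap x y t) - f' x‖ * ‖y - x‖ := ContinuousLinearMap.le_opNorm _ _
      _ ≤ K * ‖lineMap x y t - x‖ * ‖y - x‖ := by
          gcongr
          exact hlip _ (hmaps (Ico_subset_Icc_self ht))
      _ = K / 2 * ‖y - x‖ ^ 2 * (2 * t) := by rw [hdist]; ring
  have hmajorant : ∀ t : ℝ,
      HasDerivAt (fun t ↦ K / 2 * ‖y - x‖ ^ 2 * t ^ 2) (K / 2 * ‖y - x‖ ^ 2 * (2 * t)) t :=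
    fun t ↦ by simpa using (hasDerivAt_pow 2 t).const_mul (K / 2 * ‖y - x‖ ^ 2)
  simpa [g] using image_norm_le_of_norm_deriv_right_le_deriv_boundary
    (fun t ht ↦ (hg t ht).continuousWithinAt)
    (fun t ht ↦ (hg t (Ico_subset_Icc_self ht)).mono_of_mem_nhdsWithin (Icc_mem_nhdsGE_of_mem ht))
    (by simp [g]) hmajorant hbound (right_mem_Icc.2 zero_le_one)

end NormedSpace

section InnerProductSpace

variable {H : Type*} [NormedAddCommGroup H] [InnerProductSpace ℝ H]

theorem norm_sub_smul_le_of_mul_norm_sq_le_inner {u v : H} {L lam : ℝ}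
    (huv : L * ‖v‖ ^ 2 ≤ ⟪u, v⟫) (hlam : lam ∈ Icc 0 (2 * L)) : ‖u - lam • v‖ ≤ ‖u‖ := by
  refine (sq_le_sq₀ (norm_nonneg _) (norm_nonneg _)).1 ?_
  calc ‖u - lam • v‖ ^ 2
      = ‖u‖ ^ 2 - 2 * lam * ⟪u, v⟫ + lam ^ 2 * ‖v‖ ^ 2 := by
        rw [norm_sub_sq_real, inner_smul_right, norm_smul, mul_pow, Real.norm_eq_abs, sq_abs]
        ring
    _ ≤ ‖u‖ ^ 2 - 2 * lam * (L * ‖v‖ ^ 2) + lam ^ 2 * ‖v‖ ^ 2 := by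
        have := hlam.1
        gcongr
    _ = ‖u‖ ^ 2 - lam * (2 * L - lam) * ‖v‖ ^ 2 := by ring
    _ ≤ ‖u‖ ^ 2 :=
        sub_le_self _ (mul_nonneg (mul_nonneg hlam.1 (sub_nonneg.2 hlam.2)) (sq_nonneg _))

-- `HasGradientAt` presupposes a complete space, so below `h' x` being the gradient of `h` at `x` is
-- expressed through the functional `⟪h' x, ·⟫`.
variable {h : H → ℝ} {h' : H → H}

theorem le_add_inner_add_of_lipschitz_gradient {K : ℝ}
    (hgrad : ∀ x, HasFDerivAt h (innerSL ℝ (h' x)) x)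
    (hlip : ∀ x y, ‖h' x - h' y‖ ≤ K * ‖x - y‖) (x y : H) :
    h y ≤ h x + ⟪h' x, y - x⟫ + K / 2 * ‖y - x‖ ^ 2 := by
  have hremainder : ‖h y - h x - innerSL ℝ (h' x) (y - x)‖ ≤ K / 2 * ‖y - x‖ ^ 2 :=
    norm_sub_sub_fderiv_le_of_lipschitz (f' := fun z ↦ innerSL ℝ (h' z)) convex_univ
      (fun z _ ↦ (hgrad z).hasFDerivWithinAt) (mem_univ x)
      (fun z _ ↦ by rw [← map_sub, innerSL_apply_norm]; exact hlip z x) (mem_univ y)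
  rw [innerSL_apply_apply] at hremainder
  linarith [(Real.le_norm_self _).trans hremainder]

variable {L : ℝ}

theorem add_inner_add_norm_gradient_sub_sq_le (hL : 0 < L) (hconv : ConvexOn ℝ univ h)
    (hgrad : ∀ x, HasFDerivAt h (innerSL ℝ (h' x)) x)
    (hlip : ∀ x y, ‖h' x - h' y‖ ≤ 1 / L * ‖x - y‖) (x y : H) :
    h x + ⟪h' x, y - x⟫ + L / 2 * ‖h' y - h' x‖ ^ 2 ≤ h y := by
  set d : H := h' y - h' x with hd
  have hminorant : h x + ⟪h' x, y - L • d - x⟫ ≤ h (y - L • d) :=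
    add_fderiv_sub_le_of_convexOn hconv (hgrad x).hasFDerivWithinAt (mem_univ x) (mem_univ _)
  have hmajorant : h (y - L • d) ≤ h y - L * ⟪h' y, d⟫ + L / 2 * ‖d‖ ^ 2 := by
    convert le_add_inner_add_of_lipschitz_gradient hgrad hlip y (y - L • d) using 2
    · rw [sub_sub_cancel_left, inner_neg_right, inner_smul_right, sub_eq_add_neg]
    · rw [sub_sub_cancel_left, norm_neg, norm_smul, Real.norm_of_nonneg hL.le]
      field_simp
  have hsplit : ⟪h' x, y - L • d - x⟫ = ⟪h' x, y - x⟫ - L * ⟪h' x, d⟫ := by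
    rw [sub_right_comm, inner_sub_right, inner_smul_right]
  have hinner : L * ⟪h' y, d⟫ - L * ⟪h' x, d⟫ = L * ‖d‖ ^ 2 := by
    rw [← mul_sub, ← inner_sub_left, ← hd, real_inner_self_eq_norm_sq]
  linarith

theorem gradient_cocoercive (hL : 0 < L) (hconv : ConvexOn ℝ univ h)
    (hgrad : ∀ x, HasFDerivAt h (innerSL ℝ (h' x)) x)
    (hlip : ∀ x y, ‖h' x - h' y‖ ≤ 1 / L * ‖x - y‖) (x y : H) :
    L * ‖h' x - h' y‖ ^ 2 ≤ ⟪x - y, h' x - h' y⟫ := by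
  have hxy := add_inner_add_norm_gradient_sub_sq_le hL hconv hgrad hlip x y
  have hyx := add_inner_add_norm_gradient_sub_sq_le hL hconv hgrad hlip y x
  rw [norm_sub_rev, ← neg_sub x y, inner_neg_right] at hxy
  rw [real_inner_comm, inner_sub_left]
  linarith

theorem gradient_step_nonexpansive_general (hL : 0 < L) (hconv : ConvexOn ℝ univ h)
    (hgrad : ∀ x, HasFDerivAt h (innerSL ℝ (h' x)) x)
    (hlip : ∀ x y, ‖h' x - h' y‖ ≤ 1 / L * ‖x - y‖)
    {lam : ℝ} (hlam : lam ∈ Icc 0 (2 * L)) (x y : H) :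
    ‖(x - lam • h' x) - (y - lam • h' y)‖ ≤ ‖x - y‖ := by
  rw [sub_sub_sub_comm, ← smul_sub]
  exact norm_sub_smul_le_of_mul_norm_sq_le_inner (gradient_cocoercive hL hconv hgrad hlip x y) hlam

end InnerProductSpace

theorem gradient_step_nonexpansive
    {H : Type*} [NormedAddCommGroup H] [InnerProductSpace ℝ H] [CompleteSpace H]
    (h : H → ℝ) (h' : H → H) (L : ℝ) (hL : 0 < L)
    (hconv : ConvexOn ℝ Set.univ h)
    (hgrad : ∀ x : H, HasGradientAt h (h' x) x)
    (hlip : ∀ x y : H, ‖h' x - h' y‖ ≤ (1 / L) * ‖x - y‖)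
    (lam : ℝ) (hlam : lam ∈ Set.Icc (0 : ℝ) (2 * L)) :
    ∀ x y : H, ‖(x - lam • h' x) - (y - lam • h' y)‖ ≤ ‖x - y‖ :=
  gradient_step_nonexpansive_general hL hconv (fun x ↦ (hgrad x).hasFDerivAt) hlip hlam
end

section
/- Suppose that for each i ∈ I there is a bounded, closed and convex subset X_i of H with S ⊆ X_i, and that the update of w_n^{(i+1)} in Algorithm 1 is replaced by w_n^{(i+1)} = P_{X_i}(α_n·u^{(i)} + (1 − α_n)·T_i(y_n^{(i)})), where P_{X_i} denotes the metric projection onto X_i. Then for each i ∈ I the sequence {y_n^{(i)}} generated by the resulting algorithm is bounded. -/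
open Filter Topology

/-!
The projection confines every `w n (i + 1)` to the bounded set `X i`, and `x (n + 1) = w n (M + 1)`,
so each sequence `w · i` is bounded, and hence so are `z · i` and the gradients along it. As
`β n → 0`, the recursion for `d · i` is eventually a contraction with a bounded perturbation, so
the arguments of the proximal maps are bounded. Finally, a continuous convex function has a
continuous affine minorant; comparing the value at a proximal point with the value at `0`, the
quadratic term beats the affine one, which bounds the proximal point by its argument.
-/

open Asymptotics

section Bounded

variable {E F ι : Type*} [SeminormedAddCommGroup E] [SeminormedAddCommGroup F]

theorem isBigO_one_iff_exists_isBounded {l : Filter ι} {u : ι → E} :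
    u =O[l] (fun _ ↦ (1 : ℝ)) ↔ ∃ B, Bornology.IsBounded B ∧ ∀ᶠ n in l, u n ∈ B := by
  refine ⟨fun hu ↦ ?_, fun ⟨B, hB, huB⟩ ↦ ?_⟩
  · obtain ⟨C, hC⟩ := hu.bound
    exact ⟨Metric.closedBall 0 C, Metric.isBounded_closedBall, by simpa using hC⟩
  · obtain ⟨C, hC⟩ := hB.exists_norm_le
    exact .of_bound C <| huB.mono fun n hn ↦ by simpa using hC _ hn

theorem isBigO_one_comp_of_isBounded_image {g : E → F}
    (hg : ∀ B, Bornology.IsBounded B → Bornology.IsBounded (g '' B)) {l : Filter ι} {u : ι → E}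
    (hu : u =O[l] (fun _ ↦ (1 : ℝ))) : (fun n ↦ g (u n)) =O[l] (fun _ ↦ (1 : ℝ)) := by
  obtain ⟨B, hB, huB⟩ := isBigO_one_iff_exists_isBounded.1 hu
  exact isBigO_one_iff_exists_isBounded.2
    ⟨g '' B, hg B hB, huB.mono fun n ↦ Set.mem_image_of_mem g⟩

theorem isBigO_one_of_cyclic_mem {M : ℕ} {X : ℕ → Set E} {w : ℕ → ℕ → E}
    (hX : ∀ i ∈ Finset.Icc 1 M, Bornology.IsBounded (X i))
    (hw : ∀ n ≥ 1, ∀ i ∈ Finset.Icc 1 M, w n (i + 1) ∈ X i)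
    (hcycle : ∀ n ≥ 1, w (n + 1) 1 = w n (M + 1)) {i : ℕ} (hi : i ∈ Finset.Icc 1 M) :
    (w · i) =O[atTop] (fun _ ↦ (1 : ℝ)) := by
  have hsucc : ∀ j ∈ Finset.Icc 1 M, (w · (j + 1)) =O[atTop] (fun _ ↦ (1 : ℝ)) := fun j hj ↦
    isBigO_one_iff_exists_isBounded.2
      ⟨X j, hX j hj, (eventually_ge_atTop 1).mono fun n hn ↦ hw n hn j hj⟩
  obtain ⟨hi₁, hiM⟩ := Finset.mem_Icc.1 hi
  obtain rfl | hi₁ := hi₁.eq_or_lt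
  · have hM : (w · (M + 1)) =O[atTop] (fun _ ↦ (1 : ℝ)) :=
      hsucc M (Finset.right_mem_Icc.2 hiM)
    refine (hM.comp_tendsto (tendsto_sub_atTop_nat 1)).congr' ?_ .rfl
    filter_upwards [eventually_ge_atTop 2] with n hn
    simpa [Nat.sub_add_cancel (Nat.one_le_of_lt hn)] using (hcycle (n - 1) (by lia)).symm
  · simpa [Nat.sub_add_cancel hi₁.le] using hsucc (i - 1) (Finset.mem_Icc.2 (by lia))

theorem isBigO_one_of_norm_succ_le {d : ℕ → E} {c C : ℝ} (hc₀ : 0 ≤ c) (hc₁ : c < 1)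
    (hd : ∀ᶠ n in atTop, ‖d (n + 1)‖ ≤ c * ‖d n‖ + C) : d =O[atTop] (fun _ ↦ (1 : ℝ)) := by
  refine .of_norm_left <| isBigO_nat_atTop_induction (by simp) ?_
  filter_upwards with n₀
  -- `C / (1 - c)` is the fixed point of `D ↦ c * D + C`.
  refine ⟨C / (1 - c), ?_⟩
  filter_upwards [eventually_gt_atTop n₀,
    (tendsto_sub_atTop_nat 1).eventually hd] with n hn hdn D hD hind
  have hprev : ‖d (n - 1)‖ ≤ D := by simpa using hind (n - 1) (by grind)
  rw [Nat.sub_add_cancel (by lia)] at hdn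
  rw [ge_iff_le, div_le_iff₀ (sub_pos.2 hc₁)] at hD
  calc ‖‖d n‖‖ ≤ c * ‖d (n - 1)‖ + C := by simpa using hdn
    _ ≤ c * D + C := by gcongr
    _ ≤ D * ‖(1 : ℝ)‖ := by rw [norm_one]; linarith

theorem isBigO_one_of_succ_eq_add_smul [NormedSpace ℝ E] {b d : ℕ → E} {β : ℕ → ℝ} {c : ℝ}
    (hc : c < 1) (hβ : ∀ᶠ n in atTop, |β n| ≤ c) (hb : b =O[atTop] (fun _ ↦ (1 : ℝ)))
    (hd : ∀ᶠ n in atTop, d (n + 1) = b n + β n • d n) : d =O[atTop] (fun _ ↦ (1 : ℝ)) := by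
  obtain ⟨C, hC⟩ := hb.bound
  obtain ⟨n₀, hn₀⟩ := hβ.exists
  refine isBigO_one_of_norm_succ_le (C := C) ((abs_nonneg _).trans hn₀) hc ?_
  filter_upwards [hβ, hC, hd] with n hβn hbn hdn
  calc ‖d (n + 1)‖ ≤ ‖β n • d n‖ + ‖b n‖ := by rw [hdn, add_comm]; exact norm_add_le _ _
    _ ≤ c * ‖d n‖ + C := by
      rw [norm_smul, Real.norm_eq_abs]
      gcongr
      simpa using hbn

end Bounded

section Proximal

variable {E ι : Type*} [SeminormedAddCommGroup E]

/-- `IsProx f γ v p` says that `p` is a proximal point of `f` at `v` with step size `γ`, that is,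
`p = prox_{γ f}(v)` whenever that minimizer is unique. Being a predicate, it presupposes neither
existence nor uniqueness of the minimizer. -/
def IsProx (f : E → ℝ) (γ : ℝ) (v p : E) : Prop :=
  ∀ q, f p + (1 / (2 * γ)) * ‖v - p‖ ^ 2 ≤ f q + (1 / (2 * γ)) * ‖v - q‖ ^ 2

theorem IsProx.norm_sub_sq_le {f : E → ℝ} {γ : ℝ} {v p : E} (hp : IsProx f γ v p) (hγ : 0 < γ)
    (q : E) : ‖v - p‖ ^ 2 ≤ ‖v - q‖ ^ 2 + 2 * γ * (f q - f p) := by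
  have hpq := mul_le_mul_of_nonneg_left (hp q) (by positivity : 0 ≤ 2 * γ)
  field_simp at hpq
  linarith

variable [NormedSpace ℝ E]

theorem IsProx.norm_sub_le_of_affine_le {f : E → ℝ} {γ : ℝ} {v p : E} (hp : IsProx f γ v p)
    (hγ : 0 < γ) {φ : StrongDual ℝ E} {a : ℝ} (hφ : ∀ q, φ q + a ≤ f q) (q : E) :
    ‖v - p‖ ≤ ‖v - q‖ + 2 * γ * ‖φ‖ + √(2 * γ * (f q - (φ q + a))) := by
  have hφqp : φ q - φ p ≤ ‖φ‖ * (‖v - q‖ + ‖v - p‖) := by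
    calc φ q - φ p = φ (q - p) := (map_sub φ q p).symm
      _ ≤ ‖φ‖ * ‖q - p‖ := (le_abs_self _).trans (φ.le_opNorm _)
      _ ≤ ‖φ‖ * (‖v - q‖ + ‖v - p‖) := by
        gcongr
        simpa [norm_sub_rev q v] using norm_sub_le_norm_sub_add_norm_sub q v p
  have hfqp : f q - f p ≤ f q - (φ q + a) + ‖φ‖ * (‖v - q‖ + ‖v - p‖) := by
    linarith [hφ p]
  have hsq : (‖v - p‖ - γ * ‖φ‖) ^ 2 ≤
      (‖v - q‖ + γ * ‖φ‖) ^ 2 + 2 * γ * (f q - (φ q + a)) := by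
    linarith [hp.norm_sub_sq_le hγ q,
      mul_le_mul_of_nonneg_left hfqp (by positivity : 0 ≤ 2 * γ)]
  have hgap : 0 ≤ 2 * γ * (f q - (φ q + a)) :=
    mul_nonneg (by positivity) (sub_nonneg.2 (hφ q))
  have hroot : ‖v - p‖ - γ * ‖φ‖ ≤ ‖v - q‖ + γ * ‖φ‖ + √(2 * γ * (f q - (φ q + a))) := by
    refine le_of_sq_le_sq (hsq.trans ?_) (by positivity)
    rw [add_sq _ (√_), Real.sq_sqrt hgap]
    gcongr
    exact le_add_of_nonneg_right (by positivity)
  linarith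

theorem exists_strongDual_add_le {f : E → ℝ} (hf : LowerSemicontinuous f)
    (hf' : ConvexOn ℝ Set.univ f) : ∃ (φ : StrongDual ℝ E) (a : ℝ), ∀ q, φ q + a ≤ f q := by
  obtain ⟨φ, a, hφ, -⟩ := hf'.exists_affine_le_of_lt (𝕜 := ℝ) (Set.mem_univ 0)
    (sub_one_lt (f 0)) isClosed_univ (lowerSemicontinuousOn_univ_iff.2 hf)
  exact ⟨φ, a, fun q ↦ hφ ⟨q, Set.mem_univ q⟩⟩

theorem isBigO_one_of_isProx {l : Filter ι} {f : E → ℝ} (hf : LowerSemicontinuous f)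
    (hf' : ConvexOn ℝ Set.univ f) {γ : ι → ℝ} {v p : ι → E} (hγ₀ : ∀ᶠ n in l, 0 < γ n)
    (hγ : γ =O[l] (fun _ ↦ (1 : ℝ))) (hv : v =O[l] (fun _ ↦ (1 : ℝ)))
    (hp : ∀ᶠ n in l, IsProx f (γ n) (v n) (p n)) : p =O[l] (fun _ ↦ (1 : ℝ)) := by
  obtain ⟨φ, a, hφ⟩ := exists_strongDual_add_le hf hf'
  have hsqrt : (fun n ↦ √(2 * γ n * (f 0 - (φ 0 + a)))) =O[l] (fun _ ↦ (1 : ℝ)) := by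
    have := ((hγ.const_mul_left 2).mul (isBigO_const_one ℝ (f 0 - (φ 0 + a)) l)).sqrt
      (.of_forall fun _ ↦ by norm_num)
    simpa only [mul_one, Real.sqrt_one] using this
  have hγφ : (fun n ↦ 2 * γ n * ‖φ‖) =O[l] (fun _ ↦ (1 : ℝ)) := by
    simpa only [mul_one] using (hγ.const_mul_left 2).mul (isBigO_const_one ℝ ‖φ‖ l)
  have hvp : (fun n ↦ v n - p n) =O[l] (fun _ ↦ (1 : ℝ)) := by
    refine .trans (.of_bound' ?_) ((hv.norm_left.add hγφ).add hsqrt)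
    filter_upwards [hγ₀, hp] with n hγn hpn
    simpa using (hpn.norm_sub_le_of_affine_le hγn hφ 0).trans (le_abs_self _)
  simpa using hv.sub hvp

end Proximal

theorem projected_algorithm_y_bounded_general
    {E : Type*} [SeminormedAddCommGroup E] [NormedSpace ℝ E] {M : ℕ}
    {f : ℕ → E → ℝ} {g : ℕ → E → E} {X : ℕ → Set E} {θ lam β : ℕ → ℝ} {c : ℝ}
    {w z y d : ℕ → ℕ → E}
    (hf_lsc : ∀ i ∈ Finset.Icc 1 M, LowerSemicontinuous (f i))
    (hf_conv : ∀ i ∈ Finset.Icc 1 M, ConvexOn ℝ Set.univ (f i))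
    (hg : ∀ i ∈ Finset.Icc 1 M, ∀ B, Bornology.IsBounded B → Bornology.IsBounded (g i '' B))
    (hX : ∀ i ∈ Finset.Icc 1 M, Bornology.IsBounded (X i))
    (hθ : θ =O[atTop] (fun _ ↦ (1 : ℝ)))
    (hlam_pos : ∀ n ≥ 1, 0 < lam n) (hlam : lam =O[atTop] (fun _ ↦ (1 : ℝ)))
    (hc : c < 1) (hβ : ∀ᶠ n in atTop, |β n| ≤ c)
    (hz : ∀ n ≥ 1, ∀ i ∈ Finset.Icc 1 M, z n i = w n i + θ n • (w n i - w (n - 1) i))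
    (hd : ∀ n ≥ 1, ∀ i ∈ Finset.Icc 1 M, d (n + 1) i = -g i (z n i) + β n • d n i)
    (hy : ∀ n ≥ 1, ∀ i ∈ Finset.Icc 1 M,
      IsProx (f i) (lam n) (z n i + lam n • d (n + 1) i) (y n i))
    (hw : ∀ n ≥ 1, ∀ i ∈ Finset.Icc 1 M, w n (i + 1) ∈ X i)
    (hcycle : ∀ n ≥ 1, w (n + 1) 1 = w n (M + 1)) :
    ∀ i ∈ Finset.Icc 1 M, ∃ C, ∀ n ≥ 1, ‖y n i‖ ≤ C := by
  intro i hi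
  have hge : ∀ᶠ n : ℕ in atTop, n ≥ 1 := eventually_ge_atTop 1
  have hwO : (w · i) =O[atTop] (fun _ ↦ (1 : ℝ)) := isBigO_one_of_cyclic_mem hX hw hcycle hi
  have hzO : (z · i) =O[atTop] (fun _ ↦ (1 : ℝ)) := by
    have hpred : (fun n ↦ w (n - 1) i) =O[atTop] (fun _ ↦ (1 : ℝ)) :=
      hwO.comp_tendsto (tendsto_sub_atTop_nat 1)
    have hinertia : (fun n ↦ θ n • (w n i - w (n - 1) i)) =O[atTop] (fun _ ↦ (1 : ℝ)) := by
      simpa only [smul_eq_mul, mul_one] using hθ.smul (hwO.sub hpred)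
    exact (hwO.add hinertia).congr' (hge.mono fun n hn ↦ (hz n hn i hi).symm) .rfl
  have hdO : (d · i) =O[atTop] (fun _ ↦ (1 : ℝ)) :=
    isBigO_one_of_succ_eq_add_smul hc hβ
      (isBigO_one_comp_of_isBounded_image (hg i hi) hzO).neg_left
      (hge.mono fun n hn ↦ hd n hn i hi)
  have hvO : (fun n ↦ z n i + lam n • d (n + 1) i) =O[atTop] (fun _ ↦ (1 : ℝ)) := by
    have hdO' : (fun n ↦ d (n + 1) i) =O[atTop] (fun _ ↦ (1 : ℝ)) :=
      hdO.comp_tendsto (tendsto_add_atTop_nat 1)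
    exact hzO.add (by simpa only [smul_eq_mul, mul_one] using hlam.smul hdO')
  have hyO : (y · i) =O[atTop] (fun _ ↦ (1 : ℝ)) :=
    isBigO_one_of_isProx (hf_lsc i hi) (hf_conv i hi) (hge.mono hlam_pos) hlam hvO
      (hge.mono fun n hn ↦ hy n hn i hi)
  obtain ⟨C, hC⟩ := isBigO_one_nat_atTop_iff.1 hyO.norm_left
  exact ⟨C, fun n _ ↦ by simpa using hC n⟩

theorem projected_algorithm_y_bounded
    {H : Type*} [NormedAddCommGroup H] [InnerProductSpace ℝ H] [CompleteSpace H]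
    (M : ℕ) (hM : 1 ≤ M)
    (f h : ℕ → H → ℝ) (h' : ℕ → H → H) (L : ℕ → ℝ) (T : ℕ → H → H)
    (hf_cont : ∀ i ∈ Finset.Icc 1 M, Continuous (f i))
    (hf_conv : ∀ i ∈ Finset.Icc 1 M, ConvexOn ℝ Set.univ (f i))
    (hh_conv : ∀ i ∈ Finset.Icc 1 M, ConvexOn ℝ Set.univ (h i))
    (hh_grad : ∀ i ∈ Finset.Icc 1 M, ∀ x : H, HasGradientAt (h i) (h' i x) x)
    (hL_pos : ∀ i ∈ Finset.Icc 1 M, 0 < L i)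
    (hh_lip : ∀ i ∈ Finset.Icc 1 M, ∀ x y : H, ‖h' i x - h' i y‖ ≤ (1 / L i) * ‖x - y‖)
    (hT_firm : ∀ i ∈ Finset.Icc 1 M, ∀ x y : H,
      ‖T i x - T i y‖ ^ 2 ≤ @inner ℝ H _ (T i x - T i y) (x - y))
    (S : Set H) (hS : S = ⋂ i ∈ Finset.Icc 1 M, {x : H | T i x = x}) (hS_ne : S.Nonempty)
    (θ lam β α : ℕ → ℝ) (σ : ℝ) (hσ : 1 ≤ σ)
    (hθ_range : ∀ n, 0 ≤ θ n ∧ θ n < 1)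
    (hlam_pos : ∀ n, 0 < lam n)
    (hlam_le : ∀ n, ∀ i ∈ Finset.Icc 1 M, lam n ≤ 2 * L i)
    (hβ_range : ∀ n, 0 < β n ∧ β n ≤ 1)
    (hα_range : ∀ n, 0 < α n ∧ α n ≤ 1)
    (hθ_anti : Antitone θ) (hlam_anti : Antitone lam)
    (hβ_anti : Antitone β) (hα_anti : Antitone α)
    (hθ_lim : Tendsto θ atTop (𝓝 0)) (hlam_lim : Tendsto lam atTop (𝓝 0))
    (hβ_lim : Tendsto β atTop (𝓝 0)) (hα_lim : Tendsto α atTop (𝓝 0))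
    (hC1 : ¬ Summable α)
    (hC2 : Tendsto (fun n => (1 / α (n+1)) * |1 / lam (n+1) - 1 / lam n|) atTop (𝓝 0))
    (hC3 : Tendsto (fun n => (1 / lam (n+1)) * |1 - α n / α (n+1)|) atTop (𝓝 0))
    (hC4 : Tendsto (fun n => α n / lam n) atTop (𝓝 0))
    (hC5 : Tendsto (fun n => θ n / (α (n+1) * lam (n+1))) atTop (𝓝 0))
    (hC6 : ∀ n, lam n / lam (n+1) ≤ σ)
    (hC7 : Tendsto (fun n => β n / α (n+1)) atTop (𝓝 0))
    (x : ℕ → H) (w z y d : ℕ → ℕ → H) (u : ℕ → H)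
    (X : ℕ → Set H) (P : ℕ → H → H)
    (hX_bdd : ∀ i ∈ Finset.Icc 1 M, Bornology.IsBounded (X i))
    (hX_closed : ∀ i ∈ Finset.Icc 1 M, IsClosed (X i))
    (hX_conv : ∀ i ∈ Finset.Icc 1 M, Convex ℝ (X i))
    (hSX : ∀ i ∈ Finset.Icc 1 M, S ⊆ X i)
    (hP_mem : ∀ i ∈ Finset.Icc 1 M, ∀ v : H, P i v ∈ X i)
    (hP_proj : ∀ i ∈ Finset.Icc 1 M, ∀ v : H, ∀ q ∈ X i, ‖v - P i v‖ ≤ ‖v - q‖)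
    (hd1 : ∀ i ∈ Finset.Icc 1 M, d 1 i = -(h' i (z 0 i)))
    (hw1 : ∀ n ≥ 1, w n 1 = x n)
    (hz : ∀ n ≥ 1, ∀ i ∈ Finset.Icc 1 M, z n i = w n i + θ n • (w n i - w (n-1) i))
    (hd : ∀ n ≥ 1, ∀ i ∈ Finset.Icc 1 M, d (n+1) i = -(h' i (z n i)) + β n • d n i)
    (hy : ∀ n ≥ 1, ∀ i ∈ Finset.Icc 1 M, ∀ v : H,
      f i (y n i) + (1 / (2 * lam n)) * ‖z n i + lam n • d (n+1) i - y n i‖ ^ 2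
        ≤ f i v + (1 / (2 * lam n)) * ‖z n i + lam n • d (n+1) i - v‖ ^ 2)
    (hw : ∀ n ≥ 1, ∀ i ∈ Finset.Icc 1 M,
      w n (i+1) = P i (α n • u i + (1 - α n) • T i (y n i)))
    (hx : ∀ n ≥ 1, x (n+1) = w n (M+1))
    : ∀ i ∈ Finset.Icc 1 M, ∃ C, ∀ n ≥ 1, ‖y n i‖ ≤ C :=
  projected_algorithm_y_bounded_general (c := 1 / 2)
    (fun i hi ↦ (hf_cont i hi).lowerSemicontinuous) hf_conv
    (fun i hi _ ↦ (LipschitzWith.of_dist_le' fun p q ↦ by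
      simpa only [dist_eq_norm] using hh_lip i hi p q).isBounded_image)
    hX_bdd (hθ_lim.isBigO_one ℝ) (fun n _ ↦ hlam_pos n) (hlam_lim.isBigO_one ℝ) (by norm_num)
    (hβ_lim.abs.eventually_le_const (by norm_num)) hz hd hy
    (fun n hn i hi ↦ hw n hn i hi ▸ hP_mem i hi _)
    (fun n hn ↦ (hw1 _ n.succ_pos).trans (hx n hn))
end

section
/- The sequences {T_i(y_n^{(i)})} (i ∈ I), {x_n}, {w_n^{(i)}} (i ∈ I), {z_n^{(i)}} (i ∈ I) and {d_n^{(i)}} (i ∈ I) generated by Algorithm 1 are all bounded. -/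
open Filter Topology

/-!
Since `T i` is nonexpansive, the points `T i (y n i)` inherit boundedness from the `y n i`. Every
`w n (i + 1)` is a combination of the anchor `u i` and of such a point, whatever `w n i` was, so no
bound has to be propagated from one sweep to the next. This bounds `x n`, the extrapolated points
`z n i`, and the gradients `h' i (z n i)`. The directions are then driven by a bounded input through
`d (n + 1) i = -(h' i (z n i)) + β n • d n i`, which is eventually a contraction because `β n → 0`.
-/

section

open Asymptotics

section BoundedSequences

variable {𝕜 E F ι : Type*} [NormedField 𝕜] [SeminormedAddCommGroup E] [NormedSpace 𝕜 E]
  [SeminormedAddCommGroup F]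

theorem isBigO_one_atTop_nat_iff_forall_ge {f : ℕ → E} (k : ℕ) :
    f =O[atTop] (fun _ ↦ (1 : ℝ)) ↔ ∃ C, ∀ n ≥ k, ‖f n‖ ≤ C := by
  refine ⟨fun hf ↦ ?_, fun ⟨C, hC⟩ ↦ .of_bound C ?_⟩
  · obtain ⟨C, hC⟩ := isBigO_one_nat_atTop_iff.1 hf.norm_left
    exact ⟨C, fun n _ ↦ by simpa using hC n⟩
  · filter_upwards [eventually_ge_atTop k] with n hn
    simpa using hC n hn

theorem isBigO_atTop_nat_add_iff {X Y : Type*} [Norm X] [Norm Y] {f : ℕ → X} {g : ℕ → Y} (k : ℕ) :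
    (fun n ↦ f (n + k)) =O[atTop] (fun n ↦ g (n + k)) ↔ f =O[atTop] g := by
  conv_rhs => rw [← map_add_atTop_eq_nat k, isBigO_map]
  rfl

theorem isBigO_one_comp_of_isBounded_image_s3 {φ : E → F} {l : Filter ι} {f : ι → E}
    (hφ : ∀ s, Bornology.IsBounded s → Bornology.IsBounded (φ '' s))
    (hf : f =O[l] (fun _ ↦ (1 : ℝ))) : (fun k ↦ φ (f k)) =O[l] (fun _ ↦ (1 : ℝ)) := by
  obtain ⟨C, hC⟩ := hf.bound
  obtain ⟨D, hD⟩ := (hφ _ (Metric.isBounded_closedBall (x := 0) (r := C))).exists_norm_le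
  refine .of_bound D ?_
  filter_upwards [hC] with k hk
  simpa using hD _ (Set.mem_image_of_mem φ (by simpa using hk))

theorem isBigO_one_smul_add_one_sub_smul {l : Filter ι} {c : ι → 𝕜} {u v : ι → E}
    (hc : c =O[l] (fun _ ↦ (1 : ℝ))) (hu : u =O[l] (fun _ ↦ (1 : ℝ)))
    (hv : v =O[l] (fun _ ↦ (1 : ℝ))) :
    (fun k ↦ c k • u k + (1 - c k) • v k) =O[l] (fun _ ↦ (1 : ℝ)) := by
  have hc' : (fun k ↦ 1 - c k) =O[l] (fun _ ↦ (1 : ℝ)) :=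
    (isBigO_const_const 1 one_ne_zero l).sub hc
  simpa using (hc.smul hu).add (hc'.smul hv)

theorem isBigO_one_add_smul_sub_pred {θ : ℕ → 𝕜} {w : ℕ → E}
    (hθ : θ =O[atTop] (fun _ ↦ (1 : ℝ))) (hw : w =O[atTop] (fun _ ↦ (1 : ℝ))) :
    (fun n ↦ w n + θ n • (w n - w (n - 1))) =O[atTop] (fun _ ↦ (1 : ℝ)) := by
  have hw_pred : (fun n ↦ w (n - 1)) =O[atTop] (fun _ ↦ (1 : ℝ)) :=
    hw.comp_tendsto (tendsto_sub_atTop_nat 1)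
  simpa using hw.add (by simpa using hθ.smul (hw.sub hw_pred))

theorem isBoundedUnder_le_of_eventually_succ_le_mul_add {K : Type*} [Field K] [LinearOrder K]
    [IsStrictOrderedRing K] {a : ℕ → K} {q C : K} (hq₀ : 0 ≤ q) (hq₁ : q < 1)
    (ha : ∀ᶠ n in atTop, a (n + 1) ≤ q * a n + C) : IsBoundedUnder (· ≤ ·) atTop a := by
  obtain ⟨N, hN⟩ := eventually_atTop.1 ha
  -- `C / (1 - q)` is the fixed point of `t ↦ q * t + C`.
  set D := max (a N) (C / (1 - q))
  have hD_invariant : q * D + C ≤ D := by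
    have : C ≤ D * (1 - q) := (div_le_iff₀ (sub_pos.2 hq₁)).1 (le_max_right _ _)
    linarith
  refine isBoundedUnder_of_eventually_le (a := D) (eventually_atTop.2 ⟨N, fun n hn ↦ ?_⟩)
  induction n, hn using Nat.le_induction with
  | base => exact le_max_left _ _
  | succ n hn ih =>
    calc a (n + 1) ≤ q * a n + C := hN n hn
      _ ≤ q * D + C := by gcongr
      _ ≤ D := hD_invariant

theorem isBigO_one_of_eventually_succ_eq_add_smul {a b : ℕ → E} {β : ℕ → 𝕜} {q : ℝ} (hq : q < 1)
    (hβ : ∀ᶠ n in atTop, ‖β n‖ ≤ q) (hb : b =O[atTop] (fun _ ↦ (1 : ℝ)))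
    (ha : ∀ᶠ n in atTop, a (n + 1) = b n + β n • a n) : a =O[atTop] (fun _ ↦ (1 : ℝ)) := by
  obtain ⟨C, hC⟩ := hb.bound
  have hq₀ : 0 ≤ q := let ⟨n, hn⟩ := hβ.exists; (norm_nonneg (β n)).trans hn
  refine (isBigO_one_iff ℝ).2
    (isBoundedUnder_le_of_eventually_succ_le_mul_add (C := C) hq₀ hq ?_)
  filter_upwards [hβ, hC, ha] with n hβn hbn han
  calc ‖a (n + 1)‖ ≤ ‖b n‖ + ‖β n‖ * ‖a n‖ := by
        rw [han, ← norm_smul]; exact norm_add_le _ _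
    _ ≤ C + q * ‖a n‖ := by gcongr; simpa using hbn
    _ = q * ‖a n‖ + C := add_comm _ _

end BoundedSequences

/-- Firm nonexpansiveness of a self-map of a real inner product space, the property that resolvents
and metric projections share and that Algorithm 1 asks of each `T i`. -/
def FirmlyNonexpansive {E : Type*} [SeminormedAddCommGroup E] [InnerProductSpace ℝ E]
    (T : E → E) : Prop :=
  ∀ x y, ‖T x - T y‖ ^ 2 ≤ inner ℝ (T x - T y) (x - y)

theorem FirmlyNonexpansive.lipschitzWith_one {E : Type*} [SeminormedAddCommGroup E]
    [InnerProductSpace ℝ E] {T : E → E} (hT : FirmlyNonexpansive T) : LipschitzWith 1 T := by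
  refine LipschitzWith.of_dist_le_mul fun x y ↦ ?_
  rw [NNReal.coe_one, one_mul, dist_eq_norm, dist_eq_norm]
  have hsq : ‖T x - T y‖ * ‖T x - T y‖ ≤ ‖T x - T y‖ * ‖x - y‖ := by
    rw [← sq]
    exact (hT x y).trans (real_inner_le_norm _ _)
  by_contra! hlt
  exact hsq.not_gt (mul_lt_mul_of_pos_left hlt ((norm_nonneg _).trans_lt hlt))

theorem isBounded_image_of_norm_sub_le_mul {E F : Type*} [SeminormedAddCommGroup E]
    [SeminormedAddCommGroup F] {φ : E → F} {K : ℝ}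
    (hφ : ∀ x y, ‖φ x - φ y‖ ≤ K * ‖x - y‖) {s : Set E} (hs : Bornology.IsBounded s) :
    Bornology.IsBounded (φ '' s) :=
  (LipschitzWith.of_dist_le' (by simpa only [dist_eq_norm] using hφ)).isBounded_image hs

theorem alg1_sequences_bounded_general
    {𝕜 E : Type*} [NormedField 𝕜] [SeminormedAddCommGroup E] [NormedSpace 𝕜 E]
    {M : ℕ} (hM : 1 ≤ M) {g T : ℕ → E → E}
    (hg : ∀ i ∈ Finset.Icc 1 M, ∀ s, Bornology.IsBounded s → Bornology.IsBounded (g i '' s))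
    (hT : ∀ i ∈ Finset.Icc 1 M, ∀ s, Bornology.IsBounded s → Bornology.IsBounded (T i '' s))
    {θ β α : ℕ → 𝕜} {q : ℝ} (hq : q < 1)
    (hθ : θ =O[atTop] (fun _ ↦ (1 : ℝ))) (hβ : ∀ᶠ n in atTop, ‖β n‖ ≤ q)
    (hα : α =O[atTop] (fun _ ↦ (1 : ℝ)))
    {x : ℕ → E} {w z y d : ℕ → ℕ → E} {u : ℕ → E}
    (hw1 : ∀ n ≥ 1, w n 1 = x n)
    (hz : ∀ n ≥ 1, ∀ i ∈ Finset.Icc 1 M, z n i = w n i + θ n • (w n i - w (n - 1) i))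
    (hd : ∀ n ≥ 1, ∀ i ∈ Finset.Icc 1 M, d (n + 1) i = -(g i (z n i)) + β n • d n i)
    (hw : ∀ n ≥ 1, ∀ i ∈ Finset.Icc 1 M,
      w n (i + 1) = α n • u i + (1 - α n) • T i (y n i))
    (hx : ∀ n ≥ 1, x (n + 1) = w n (M + 1))
    (hy : ∀ i ∈ Finset.Icc 1 M, ∃ C, ∀ n ≥ 1, ‖y n i‖ ≤ C) :
    (∀ i ∈ Finset.Icc 1 M, ∃ C, ∀ n ≥ 1, ‖T i (y n i)‖ ≤ C) ∧
      (∃ C, ∀ n ≥ 1, ‖x n‖ ≤ C) ∧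
      (∀ i ∈ Finset.Icc 1 M, ∃ C, ∀ n ≥ 1, ‖w n i‖ ≤ C) ∧
      (∀ i ∈ Finset.Icc 1 M, ∃ C, ∀ n ≥ 1, ‖z n i‖ ≤ C) ∧
      (∀ i ∈ Finset.Icc 1 M, ∃ C, ∀ n ≥ 1, ‖d n i‖ ≤ C) := by
  simp only [← isBigO_one_atTop_nat_iff_forall_ge] at hy ⊢
  have hpos : ∀ᶠ n : ℕ in atTop, n ≥ 1 := eventually_ge_atTop 1
  have hTy i (hi : i ∈ Finset.Icc 1 M) := isBigO_one_comp_of_isBounded_image_s3 (hT i hi) (hy i hi)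
  have hw_succ : ∀ i ∈ Finset.Icc 1 M, (w · (i + 1)) =O[atTop] (fun _ ↦ (1 : ℝ)) := fun i hi ↦
    (isBigO_one_smul_add_one_sub_smul hα (isBigO_const_const (u i) one_ne_zero _) (hTy i hi)).congr'
      (hpos.mono fun n hn ↦ (hw n hn i hi).symm) .rfl
  have hx_bdd : x =O[atTop] (fun _ ↦ (1 : ℝ)) :=
    (isBigO_atTop_nat_add_iff (g := fun _ ↦ (1 : ℝ)) 1).1 <|
      (hw_succ M (Finset.right_mem_Icc.2 hM)).congr' (hpos.mono fun n hn ↦ (hx n hn).symm) .rfl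
  have hw_bdd : ∀ i ∈ Finset.Icc 1 M, (w · i) =O[atTop] (fun _ ↦ (1 : ℝ)) := by
    rintro (_ | _ | i) hi
    · simp at hi
    · exact hx_bdd.congr' (hpos.mono fun n hn ↦ (hw1 n hn).symm) .rfl
    · exact hw_succ (i + 1) (by simp only [Finset.mem_Icc] at hi ⊢; lia)
  have hz_bdd : ∀ i ∈ Finset.Icc 1 M, (z · i) =O[atTop] (fun _ ↦ (1 : ℝ)) := fun i hi ↦
    (isBigO_one_add_smul_sub_pred hθ (hw_bdd i hi)).congr'
      (hpos.mono fun n hn ↦ (hz n hn i hi).symm) .rfl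
  exact ⟨hTy, hx_bdd, hw_bdd, hz_bdd, fun i hi ↦ isBigO_one_of_eventually_succ_eq_add_smul hq hβ
    (isBigO_one_comp_of_isBounded_image_s3 (hg i hi) (hz_bdd i hi)).neg_left
    (hpos.mono fun n hn ↦ hd n hn i hi)⟩

end

theorem alg1_sequences_bounded
    {H : Type*} [NormedAddCommGroup H] [InnerProductSpace ℝ H] [CompleteSpace H]
    (M : ℕ) (hM : 1 ≤ M)
    (f h : ℕ → H → ℝ) (h' : ℕ → H → H) (L : ℕ → ℝ) (T : ℕ → H → H)
    (hf_cont : ∀ i ∈ Finset.Icc 1 M, Continuous (f i))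
    (hf_conv : ∀ i ∈ Finset.Icc 1 M, ConvexOn ℝ Set.univ (f i))
    (hh_conv : ∀ i ∈ Finset.Icc 1 M, ConvexOn ℝ Set.univ (h i))
    (hh_grad : ∀ i ∈ Finset.Icc 1 M, ∀ x : H, HasGradientAt (h i) (h' i x) x)
    (hL_pos : ∀ i ∈ Finset.Icc 1 M, 0 < L i)
    (hh_lip : ∀ i ∈ Finset.Icc 1 M, ∀ x y : H, ‖h' i x - h' i y‖ ≤ (1 / L i) * ‖x - y‖)
    (hT_firm : ∀ i ∈ Finset.Icc 1 M, ∀ x y : H,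
      ‖T i x - T i y‖ ^ 2 ≤ @inner ℝ H _ (T i x - T i y) (x - y))
    (S : Set H) (hS : S = ⋂ i ∈ Finset.Icc 1 M, {x : H | T i x = x}) (hS_ne : S.Nonempty)
    (θ lam β α : ℕ → ℝ) (σ : ℝ) (hσ : 1 ≤ σ)
    (hθ_range : ∀ n, 0 ≤ θ n ∧ θ n < 1)
    (hlam_pos : ∀ n, 0 < lam n)
    (hlam_le : ∀ n, ∀ i ∈ Finset.Icc 1 M, lam n ≤ 2 * L i)
    (hβ_range : ∀ n, 0 < β n ∧ β n ≤ 1)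
    (hα_range : ∀ n, 0 < α n ∧ α n ≤ 1)
    (hθ_anti : Antitone θ) (hlam_anti : Antitone lam)
    (hβ_anti : Antitone β) (hα_anti : Antitone α)
    (hθ_lim : Tendsto θ atTop (𝓝 0)) (hlam_lim : Tendsto lam atTop (𝓝 0))
    (hβ_lim : Tendsto β atTop (𝓝 0)) (hα_lim : Tendsto α atTop (𝓝 0))
    (hC1 : ¬ Summable α)
    (hC2 : Tendsto (fun n => (1 / α (n+1)) * |1 / lam (n+1) - 1 / lam n|) atTop (𝓝 0))
    (hC3 : Tendsto (fun n => (1 / lam (n+1)) * |1 - α n / α (n+1)|) atTop (𝓝 0))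
    (hC4 : Tendsto (fun n => α n / lam n) atTop (𝓝 0))
    (hC5 : Tendsto (fun n => θ n / (α (n+1) * lam (n+1))) atTop (𝓝 0))
    (hC6 : ∀ n, lam n / lam (n+1) ≤ σ)
    (hC7 : Tendsto (fun n => β n / α (n+1)) atTop (𝓝 0))
    (x : ℕ → H) (w z y d : ℕ → ℕ → H) (u : ℕ → H)
    (hd1 : ∀ i ∈ Finset.Icc 1 M, d 1 i = -(h' i (z 0 i)))
    (hw1 : ∀ n ≥ 1, w n 1 = x n)
    (hz : ∀ n ≥ 1, ∀ i ∈ Finset.Icc 1 M, z n i = w n i + θ n • (w n i - w (n-1) i))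
    (hd : ∀ n ≥ 1, ∀ i ∈ Finset.Icc 1 M, d (n+1) i = -(h' i (z n i)) + β n • d n i)
    (hy : ∀ n ≥ 1, ∀ i ∈ Finset.Icc 1 M, ∀ v : H,
      f i (y n i) + (1 / (2 * lam n)) * ‖z n i + lam n • d (n+1) i - y n i‖ ^ 2
        ≤ f i v + (1 / (2 * lam n)) * ‖z n i + lam n • d (n+1) i - v‖ ^ 2)
    (hw : ∀ n ≥ 1, ∀ i ∈ Finset.Icc 1 M,
      w n (i+1) = α n • u i + (1 - α n) • T i (y n i))
    (hx : ∀ n ≥ 1, x (n+1) = w n (M+1))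
    (hy_bdd : ∀ i ∈ Finset.Icc 1 M, ∃ C, ∀ n ≥ 1, ‖y n i‖ ≤ C)
    : (∀ i ∈ Finset.Icc 1 M, ∃ C, ∀ n ≥ 1, ‖T i (y n i)‖ ≤ C) ∧
      (∃ C, ∀ n ≥ 1, ‖x n‖ ≤ C) ∧
      (∀ i ∈ Finset.Icc 1 M, ∃ C, ∀ n ≥ 1, ‖w n i‖ ≤ C) ∧
      (∀ i ∈ Finset.Icc 1 M, ∃ C, ∀ n ≥ 1, ‖z n i‖ ≤ C) ∧
      (∀ i ∈ Finset.Icc 1 M, ∃ C, ∀ n ≥ 1, ‖d n i‖ ≤ C) := by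
  exact alg1_sequences_bounded_general hM
    (fun i hi _ ↦ isBounded_image_of_norm_sub_le_mul (hh_lip i hi))
    (fun i hi _ ↦ (FirmlyNonexpansive.lipschitzWith_one (hT_firm i hi)).isBounded_image)
    one_half_lt_one (hθ_lim.isBigO_one ℝ) (hβ_lim.norm.eventually_le_const (by simp))
    (hα_lim.isBigO_one ℝ) hw1 hz hd hw hx hy_bdd
end
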